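/- Let Ω ⊆ ℝ^D be a connected open set and let f : Ω → ℝ be a real analytic function that is not identically zero on Ω. Then for every compact set Δ ⊂ Ω, the function x ↦ |log|f(x)|| is Lebesgue integrable on Δ; in particular ∫_Δ |log|f(x)|| dx < ∞. -/

import Mathlib

open MeasureTheory

/-!
By the identity theorem `f` is not identically zero near any point of `Ω`, so its Taylor series
there gives a direction `v` and an order `k` with `∂ᵥᵏ f ≠ 0`. On a segment parallel to `v` the set
where `|f| < ε` is then small: where the `k`-th derivative is at least `c`, the `(k - 1)`-st is at
least `c r` outside an interval of length `4 r`, and iterating this on the two remaining pieces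
bounds the measure of `{|f| < c rᵏ}` by a multiple of `r`. Averaging over the translates of the
segment carries the bound `O(ε ^ (1 / k))` over to the whole space, and such a power bound makes
`log |f|` integrable by the layer cake formula.
-/

open Filter Set Topology

section SublevelSets

lemma mul_abs_sub_le_abs_sub_of_le_abs_deriv {s : Set ℝ} (hs : s.OrdConnected) {g g' : ℝ → ℝ}
    {c : ℝ} (hg : ∀ t ∈ s, HasDerivWithinAt g (g' t) s t) (hc : ∀ t ∈ s, c ≤ |g' t|)
    {x y : ℝ} (hx : x ∈ s) (hy : y ∈ s) : c * |x - y| ≤ |g x - g y| := by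
  wlog hxy : x < y generalizing x y
  · rcases (not_lt.mp hxy).eq_or_lt with rfl | hyx
    · simp
    · rw [abs_sub_comm x, abs_sub_comm (g x)]
      exact this hy hx hyx
  have hIcc : Icc x y ⊆ s := hs.out hx hy
  obtain ⟨ξ, hξ, hslope⟩ := exists_hasDerivAt_eq_slope g g' hxy
    (fun t ht => (hg t (hIcc ht)).continuousWithinAt.mono hIcc)
    (fun t ht => (hg t (hIcc (Ioo_subset_Icc_self ht))).hasDerivAt
      (mem_of_superset (Icc_mem_nhds ht.1 ht.2) hIcc))
  have hcξ := hc ξ (hIcc (Ioo_subset_Icc_self hξ))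
  rwa [hslope, abs_div, le_div_iff₀ (abs_pos.mpr (sub_pos.mpr hxy).ne'), abs_sub_comm y,
    abs_sub_comm (g y)] at hcξ

lemma exists_forall_mul_le_abs_of_mul_abs_sub_le {s : Set ℝ} {g : ℝ → ℝ} {c : ℝ} (hc : 0 ≤ c)
    (hg : ∀ x ∈ s, ∀ y ∈ s, c * |x - y| ≤ |g x - g y|) (r : ℝ) :
    ∃ q, ∀ t ∈ s, 2 * r ≤ |t - q| → c * r ≤ |g t| := by
  by_cases h : ∃ q ∈ s, |g q| < c * r
  · obtain ⟨q, hq, hgq⟩ := h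
    refine ⟨q, fun t ht htq => ?_⟩
    have hexpand : c * (2 * r) ≤ |g t - g q| :=
      (mul_le_mul_of_nonneg_left htq hc).trans (hg t ht q hq)
    linarith [abs_sub (g t) (g q)]
  · push Not at h
    exact ⟨0, fun t ht _ => h t ht⟩

lemma volume_le_ofReal_sub_add_inter_Iic_add_inter_Ici (A : Set ℝ) (a b : ℝ) :
    volume A ≤ ENNReal.ofReal (b - a) + (volume (A ∩ Iic a) + volume (A ∩ Ici b)) := by
  have hcover : A ⊆ Icc a b ∪ (A ∩ Iic a ∪ A ∩ Ici b) := by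
    intro t ht
    rcases le_total t a with hta | hta
    · exact Or.inr (Or.inl ⟨ht, hta⟩)
    rcases le_total b t with hbt | hbt
    · exact Or.inr (Or.inr ⟨ht, hbt⟩)
    · exact Or.inl ⟨hta, hbt⟩
  rw [← Real.volume_Icc]
  exact (measure_mono hcover).trans <| (measure_union_le _ _).trans <|
    add_le_add_right (measure_union_le _ _) _

lemma volume_abs_lt_mul_pow_le {s : Set ℝ} (hs : s.OrdConnected) {G : ℕ → ℝ → ℝ} {k : ℕ}
    {c r : ℝ} (hc : 0 ≤ c) (hr : 0 ≤ r)
    (hG : ∀ i < k, ∀ t ∈ s, HasDerivWithinAt (G i) (G (i + 1) t) s t)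
    (hk : ∀ t ∈ s, c ≤ |G k t|) :
    volume {t ∈ s | |G 0 t| < c * r ^ k} ≤ ENNReal.ofReal (4 * (2 ^ k - 1) * r) := by
  induction k generalizing s c with
  | zero =>
    have hempty : {t ∈ s | |G 0 t| < c * r ^ 0} = ∅ := by
      simpa [Set.eq_empty_iff_forall_notMem] using hk
    rw [hempty, measure_empty]
    exact zero_le
  | succ k ih =>
    obtain ⟨q, hq⟩ := exists_forall_mul_le_abs_of_mul_abs_sub_le hc (fun x hx y hy =>
      mul_abs_sub_le_abs_sub_of_le_abs_deriv hs (hG k k.lt_succ_self) hk hx hy) r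
    have piece_le {J : Set ℝ} (hJ : J.OrdConnected) (hJq : ∀ t ∈ J, 2 * r ≤ |t - q|) :
        volume ({t ∈ s | |G 0 t| < c * r ^ (k + 1)} ∩ J) ≤
          ENNReal.ofReal (4 * (2 ^ k - 1) * r) := by
      rw [pow_succ', ← mul_assoc]
      have hderiv : ∀ i < k, ∀ t ∈ s ∩ J, HasDerivWithinAt (G i) (G (i + 1) t) (s ∩ J) t :=
        fun i hi t ht => (hG i (by lia) t ht.1).mono inter_subset_left
      refine (measure_mono ?_).trans (ih (hs.inter hJ) (mul_nonneg hc hr) hderiv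
        fun t ht => hq t ht.1 (hJq t ht.2))
      exact fun t ht => ⟨⟨ht.1.1, ht.2⟩, ht.1.2⟩
    have left_le := piece_le (ordConnected_Iic (a := q - 2 * r)) fun t ht => by
      rw [abs_sub_comm]
      exact (le_sub_comm.mp ht).trans (le_abs_self _)
    have right_le := piece_le (ordConnected_Ici (a := q + 2 * r)) fun t ht =>
      (le_sub_iff_add_le'.mpr ht).trans (le_abs_self _)
    have hpow : (0 : ℝ) ≤ 2 ^ k - 1 := sub_nonneg.mpr (one_le_pow₀ one_le_two)
    calc volume {t ∈ s | |G 0 t| < c * r ^ (k + 1)}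
      _ ≤ ENNReal.ofReal (q + 2 * r - (q - 2 * r)) +
          (ENNReal.ofReal (4 * (2 ^ k - 1) * r) + ENNReal.ofReal (4 * (2 ^ k - 1) * r)) :=
        (volume_le_ofReal_sub_add_inter_Iic_add_inter_Ici _ _ _).trans <|
          add_le_add_right (add_le_add left_le right_le) _
      _ = ENNReal.ofReal (4 * (2 ^ (k + 1) - 1) * r) := by
        rw [← ENNReal.ofReal_add (by positivity) (by positivity),
          ← ENNReal.ofReal_add (by linarith) (by positivity)]
        congr 1
        ring

end SublevelSets

section Slices

lemma lintegral_measure_preimage_add_right {G T : Type*} [AddGroup G] [MeasurableSpace G]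
    [MeasurableAdd₂ G] [MeasurableSpace T] (μ : Measure G) [SFinite μ] [μ.IsAddRightInvariant]
    (ν : Measure T) [SFinite ν] {γ : T → G} (hγ : Measurable γ) {S : Set G}
    (hS : MeasurableSet S) :
    ∫⁻ x, ν {t | x + γ t ∈ S} ∂μ = ν univ * μ S := by
  have hS' : MeasurableSet {p : G × T | p.1 + γ p.2 ∈ S} :=
    hS.preimage (measurable_fst.add (hγ.comp measurable_snd))
  calc ∫⁻ x, ν {t | x + γ t ∈ S} ∂μ
    _ = (μ.prod ν) {p | p.1 + γ p.2 ∈ S} := (Measure.prod_apply hS').symm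
    _ = ∫⁻ t, μ ((· + γ t) ⁻¹' S) ∂ν := Measure.prod_apply_symm hS'
    _ = ν univ * μ S := by simp [measure_preimage_add_right, mul_comm]

lemma measure_le_mul_measure_ball_of_volume_line_le {E : Type*} [NormedAddCommGroup E]
    [NormedSpace ℝ E] [MeasurableSpace E] [BorelSpace E] [SecondCountableTopology E]
    (μ : Measure E) [SFinite μ] [μ.IsAddRightInvariant] {S : Set E} (hS : MeasurableSet S)
    {x₀ : E} {R : ℝ} (hSR : S ⊆ Metric.ball x₀ R) (v : E) {m : ENNReal}
    (hm : ∀ x, volume {t : ℝ | x + t • v ∈ S} ≤ m) :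
    μ S ≤ m * μ (Metric.ball x₀ (R + ‖v‖)) := by
  have slice_le (x : E) : volume.restrict (Icc 0 1) {t : ℝ | x + t • v ∈ S} ≤
      (Metric.ball x₀ (R + ‖v‖)).indicator (fun _ => m) x := by
    by_cases hx : x ∈ Metric.ball x₀ (R + ‖v‖)
    · rw [indicator_of_mem hx]
      exact (Measure.restrict_apply_le _ _).trans (hm x)
    · rw [indicator_of_notMem hx, Measure.restrict_apply' measurableSet_Icc]
      suffices hempty : {t : ℝ | x + t • v ∈ S} ∩ Icc 0 1 = ∅ by simp [hempty]
      refine eq_empty_of_forall_notMem fun t ⟨htS, ht⟩ => hx ?_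
      have hdist : dist x (x + t • v) ≤ ‖v‖ := by
        rw [dist_self_add_right, norm_smul, Real.norm_of_nonneg ht.1]
        exact mul_le_of_le_one_left (norm_nonneg v) ht.2
      have hball : dist (x + t • v) x₀ < R := hSR htS
      rw [Metric.mem_ball]
      linarith [dist_triangle x (x + t • v) x₀]
  calc μ S
    _ = ∫⁻ x, volume.restrict (Icc 0 1) {t : ℝ | x + t • v ∈ S} ∂μ := by
      rw [lintegral_measure_preimage_add_right μ _ (by fun_prop) hS]
      simp
    _ ≤ ∫⁻ x, (Metric.ball x₀ (R + ‖v‖)).indicator (fun _ => m) x ∂μ := lintegral_mono slice_le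
    _ = m * μ (Metric.ball x₀ (R + ‖v‖)) := lintegral_indicator_const measurableSet_ball m

end Slices

section DirectionalDerivatives

lemma exists_iteratedFDeriv_diag_ne_zero {𝕜 E F : Type*} [NontriviallyNormedField 𝕜] [CharZero 𝕜]
    [NormedAddCommGroup E] [NormedSpace 𝕜 E] [NormedAddCommGroup F] [NormedSpace 𝕜 F]
    [CompleteSpace F] {f : E → F} {x : E} (hf : AnalyticAt 𝕜 f x) (hne : ∃ᶠ y in 𝓝 x, f y ≠ 0) :
    ∃ k v, iteratedFDeriv 𝕜 k f x (fun _ => v) ≠ 0 := by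
  obtain ⟨p, r, hp⟩ := hf
  obtain ⟨y, hy, hfy⟩ := (frequently_iff.mp hne) (Metric.eball_mem_nhds x hp.r_pos)
  by_contra! hzero
  have hsum := hp.hasSum_iteratedFDeriv (y := y - x) (by simpa [edist_eq_enorm_sub] using hy)
  simp only [hzero, smul_zero, add_sub_cancel] at hsum
  exact hfy (hsum.unique hasSum_zero)

variable {E : Type*} [NormedAddCommGroup E] [NormedSpace ℝ E]

lemma hasDerivAt_iteratedFDeriv_add_smul {F : Type*} [NormedAddCommGroup F] [NormedSpace ℝ F]
    {f : E → F} {k i : ℕ} (hi : i < k) {x v : E} {t : ℝ} (hf : ContDiffAt ℝ k f (x + t • v)) :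
    HasDerivAt (fun s : ℝ => iteratedFDeriv ℝ i f (x + s • v) fun _ => v)
      (iteratedFDeriv ℝ (i + 1) f (x + t • v) fun _ => v) t := by
  have hline : HasDerivAt (fun s : ℝ => x + s • v) v t := by
    simpa using ((hasDerivAt_id t).smul_const v).const_add x
  have hfderiv := (hf.differentiableAt_iteratedFDeriv (mod_cast hi)).hasFDerivAt
  exact (hfderiv.continuousMultilinear_apply_const fun _ => v).comp_hasDerivAt t hline

lemma volume_line_inter_abs_lt_le_rpow {f : E → ℝ} {U : Set E} (hU : Convex ℝ U) {k : ℕ}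
    (hk : k ≠ 0) (hf : ∀ x ∈ U, ContDiffAt ℝ k f x) {v : E} {c : ℝ} (hc : 0 < c)
    (hv : ∀ x ∈ U, c ≤ |iteratedFDeriv ℝ k f x fun _ => v|) {ε : ℝ} (hε : 0 ≤ ε) (x : E) :
    volume {t : ℝ | x + t • v ∈ U ∩ {y | |f y| < ε}} ≤
      ENNReal.ofReal (4 * (2 ^ k - 1) * (ε / c) ^ (k⁻¹ : ℝ)) := by
  have hsegment : OrdConnected {t : ℝ | x + t • v ∈ U} := by
    have hline : (fun t : ℝ => x + t • v) = AffineMap.lineMap x (x + v) := by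
      ext t
      simp [AffineMap.lineMap_apply, add_comm]
    have hpreimage := (hU.affine_preimage (AffineMap.lineMap x (x + v) : ℝ →ᵃ[ℝ] E)).ordConnected
    rwa [← hline] at hpreimage
  have hpow : c * ((ε / c) ^ (k⁻¹ : ℝ)) ^ k = ε := by
    rw [Real.rpow_inv_natCast_pow (by positivity) hk, mul_div_cancel₀ _ hc.ne']
  have hsublevel := volume_abs_lt_mul_pow_le (r := (ε / c) ^ (k⁻¹ : ℝ)) hsegment hc.le
    (by positivity)
    (fun i hi t ht => (hasDerivAt_iteratedFDeriv_add_smul hi (hf _ ht)).hasDerivWithinAt)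
    (fun t ht => hv _ ht)
  simpa only [hpow, iteratedFDeriv_zero_apply] using! hsublevel

lemma exists_measure_inter_abs_lt_le_rpow [FiniteDimensional ℝ E] [MeasurableSpace E]
    [BorelSpace E] (μ : Measure E) [μ.IsAddHaarMeasure] {f : E → ℝ} {x₀ v : E} {k : ℕ}
    (hk : k ≠ 0) (hf : ContDiffAt ℝ k f x₀) (hv : iteratedFDeriv ℝ k f x₀ (fun _ => v) ≠ 0) :
    ∃ U ∈ 𝓝 x₀, ∃ C ≠ ⊤, ∀ ε > 0,
      μ (U ∩ {x | |f x| < ε}) ≤ C * ENNReal.ofReal (ε ^ (k⁻¹ : ℝ)) := by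
  obtain ⟨c, hc, hcv⟩ := exists_between (abs_pos.mpr hv)
  have hcont : ContinuousAt (fun x => |iteratedFDeriv ℝ k f x fun _ => v|) x₀ :=
    ((hf.continuousAt_iteratedFDeriv le_rfl).eval_const _).abs
  obtain ⟨R, hR, hball⟩ := Metric.eventually_nhds_iff_ball.mp
    ((hf.eventually (by simp)).and (hcont.eventually_const_lt hcv))
  refine ⟨Metric.ball x₀ R, Metric.ball_mem_nhds x₀ hR,
    ENNReal.ofReal (4 * (2 ^ k - 1) / c ^ (k⁻¹ : ℝ)) * μ (Metric.ball x₀ (R + ‖v‖)),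
    ENNReal.mul_ne_top ENNReal.ofReal_ne_top measure_ball_lt_top.ne, fun ε hε => ?_⟩
  have hmeas : MeasurableSet (Metric.ball x₀ R ∩ {x | |f x| < ε}) := by
    have hfball : ContinuousOn f (Metric.ball x₀ R) := fun x hx =>
      (hball x hx).1.continuousAt.continuousWithinAt
    exact (hfball.abs.isOpen_inter_preimage Metric.isOpen_ball isOpen_Iio).measurableSet
  have hscale : 4 * (2 ^ k - 1) * (ε / c) ^ (k⁻¹ : ℝ) =
      4 * (2 ^ k - 1) / c ^ (k⁻¹ : ℝ) * ε ^ (k⁻¹ : ℝ) := by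
    rw [Real.div_rpow hε.le hc.le]
    ring
  refine (measure_le_mul_measure_ball_of_volume_line_le μ hmeas inter_subset_left v
    (volume_line_inter_abs_lt_le_rpow (convex_ball x₀ R) hk (fun x hx => (hball x hx).1) hc
      (fun x hx => (hball x hx).2.le) hε.le)).trans_eq ?_
  rw [hscale, ENNReal.ofReal_mul' (by positivity), mul_right_comm]

end DirectionalDerivatives

section LogIntegrability

variable {α : Type*} [MeasurableSpace α] {μ : Measure α} {f : α → ℝ}

lemma integrable_posLog_inv_of_measure_abs_lt_le_rpow (hf : AEMeasurable f μ) {C : ENNReal}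
    (hC : C ≠ ⊤) {p : ℝ} (hp : 0 < p)
    (h : ∀ ε ∈ Ioo (0 : ℝ) 1, μ {x | |f x| < ε} ≤ C * ENNReal.ofReal (ε ^ p)) :
    Integrable (fun x => Real.posLog (f x)⁻¹) μ := by
  have hmeas : AEMeasurable (fun x => Real.posLog (f x)⁻¹) μ :=
    Real.continuous_posLog.measurable.comp_aemeasurable hf.inv
  have hnonneg : 0 ≤ᵐ[μ] fun x => Real.posLog (f x)⁻¹ := .of_forall fun _ => Real.posLog_nonneg
  refine ⟨hmeas.aestronglyMeasurable, ?_⟩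
  have tail_le : ∀ s ∈ Ioi (0 : ℝ), μ {x | s < Real.posLog (f x)⁻¹} ≤
      C * ENNReal.ofReal (Real.exp (-p * s)) := by
    intro s hs
    have hexp : Real.exp (-p * s) = Real.exp (-s) ^ p := by rw [← Real.exp_mul]; ring_nf
    rw [hexp]
    refine (measure_mono fun x hx => ?_).trans
      (h _ ⟨Real.exp_pos _, Real.exp_lt_one_iff.mpr (neg_lt_zero.mpr hs)⟩)
    have hlog : s < -Real.log |f x| := by
      rw [mem_ofPred_eq, Real.posLog_apply, lt_max_iff, Real.log_inv, ← Real.log_abs] at hx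
      exact hx.resolve_left (not_lt.mpr (le_of_lt hs))
    exact Real.lt_exp_of_log_lt (by linarith)
  rw [hasFiniteIntegral_iff_ofReal hnonneg, lintegral_eq_lintegral_meas_lt μ hnonneg hmeas]
  calc ∫⁻ s in Ioi 0, μ {x | s < Real.posLog (f x)⁻¹}
    _ ≤ ∫⁻ s in Ioi 0, C * ENNReal.ofReal (Real.exp (-p * s)) :=
      setLIntegral_mono' measurableSet_Ioi tail_le
    _ = C * ∫⁻ s in Ioi 0, ENNReal.ofReal (Real.exp (-p * s)) := lintegral_const_mul' _ _ hC
    _ < ⊤ := ENNReal.mul_lt_top hC.lt_top (exp_neg_integrableOn_Ioi 0 hp).lintegral_lt_top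

lemma integrable_log_of_measure_abs_lt_le_rpow [IsFiniteMeasure μ] (hf : AEMeasurable f μ) {M : ℝ}
    (hM : ∀ᵐ x ∂μ, |f x| ≤ M) {C : ENNReal} (hC : C ≠ ⊤) {p : ℝ} (hp : 0 < p)
    (h : ∀ ε ∈ Ioo (0 : ℝ) 1, μ {x | |f x| < ε} ≤ C * ENNReal.ofReal (ε ^ p)) :
    Integrable (fun x => Real.log (f x)) μ := by
  have hposLog : Integrable (fun x => Real.posLog (f x)) μ := by
    refine .of_bound (Real.continuous_posLog.measurable.comp_aemeasurable hf).aestronglyMeasurable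
      (Real.posLog M) (hM.mono fun x hx => ?_)
    rw [Real.norm_of_nonneg Real.posLog_nonneg, ← Real.posLog_abs (f x)]
    exact Real.posLog_le_posLog (abs_nonneg _) hx
  simpa only [Pi.sub_def, Real.posLog_sub_posLog_inv] using
    hposLog.sub (integrable_posLog_inv_of_measure_abs_lt_le_rpow hf hC hp h)

end LogIntegrability

section AnalyticFunctions

lemma integrableAtFilter_log_of_ne_zero {X : Type*} [TopologicalSpace X] [MeasurableSpace X]
    [OpensMeasurableSpace X] {μ : Measure X} [IsLocallyFiniteMeasure μ] {f : X → ℝ} {x₀ : X}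
    (hf : ∀ᶠ x in 𝓝 x₀, ContinuousAt f x) (hx₀ : f x₀ ≠ 0) :
    IntegrableAtFilter (fun x => Real.log (f x)) (𝓝 x₀) μ := by
  obtain ⟨U, hU, hUopen, hx₀U⟩ :=
    eventually_nhds_iff.mp (hf.and (hf.self_of_nhds.eventually_ne hx₀))
  have hlog : ContinuousOn (fun x => Real.log (f x)) U := fun x hx =>
    ((hU x hx).1.log (hU x hx).2).continuousWithinAt
  rw [← hUopen.nhdsWithin_eq hx₀U]
  exact hlog.integrableAt_nhdsWithin hUopen.measurableSet hx₀U

variable {E : Type*} [NormedAddCommGroup E] [NormedSpace ℝ E] [FiniteDimensional ℝ E]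
  [MeasurableSpace E] [BorelSpace E] (μ : Measure E) [μ.IsAddHaarMeasure] {f : E → ℝ}

lemma integrableAtFilter_log_of_iteratedFDeriv_ne_zero {x₀ v : E} {k : ℕ} (hk : k ≠ 0)
    (hf : ContDiffAt ℝ k f x₀) (hv : iteratedFDeriv ℝ k f x₀ (fun _ => v) ≠ 0) :
    IntegrableAtFilter (fun x => Real.log (f x)) (𝓝 x₀) μ := by
  obtain ⟨U, hU, C, hC, hsublevel⟩ := exists_measure_inter_abs_lt_le_rpow μ hk hf hv
  have hbound : ∀ᶠ x in 𝓝 x₀, |f x| < |f x₀| + 1 :=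
    hf.continuousAt.abs.eventually_lt_const (lt_add_one _)
  obtain ⟨R, hR, hball⟩ := Metric.eventually_nhds_iff_ball.mp
    ((hf.eventually (by simp)).and (hbound.and hU))
  have hcont : ContinuousOn f (Metric.ball x₀ R) := fun x hx =>
    (hball x hx).1.continuousAt.continuousWithinAt
  have : IsFiniteMeasure (μ.restrict (Metric.ball x₀ R)) :=
    isFiniteMeasure_restrict.mpr measure_ball_lt_top.ne
  refine ⟨Metric.ball x₀ R, Metric.ball_mem_nhds x₀ hR, ?_⟩
  refine integrable_log_of_measure_abs_lt_le_rpow (hcont.aemeasurable measurableSet_ball)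
    (ae_restrict_of_forall_mem measurableSet_ball fun x hx => (hball x hx).2.1.le) hC
    (p := (k⁻¹ : ℝ)) (by positivity) fun ε hε => ?_
  rw [Measure.restrict_apply' measurableSet_ball, inter_comm]
  exact (measure_mono (inter_subset_inter_left _ fun x hx => (hball x hx).2.2)).trans
    (hsublevel ε hε.1)

lemma integrableAtFilter_log_of_analyticAt {x₀ : E} (hf : AnalyticAt ℝ f x₀)
    (hne : ∃ᶠ x in 𝓝 x₀, f x ≠ 0) :
    IntegrableAtFilter (fun x => Real.log (f x)) (𝓝 x₀) μ := by
  obtain ⟨k, v, hv⟩ := exists_iteratedFDeriv_diag_ne_zero hf hne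
  rcases eq_or_ne k 0 with rfl | hk
  · rw [iteratedFDeriv_zero_apply] at hv
    exact integrableAtFilter_log_of_ne_zero
      (hf.eventually_analyticAt.mono fun x hx => hx.continuousAt) hv
  · exact integrableAtFilter_log_of_iteratedFDeriv_ne_zero μ hk hf.contDiffAt hv

lemma locallyIntegrableOn_log_of_analyticOnNhd {Ω : Set E} (hΩ : IsPreconnected Ω)
    (hf : AnalyticOnNhd ℝ f Ω) (hne : ∃ x ∈ Ω, f x ≠ 0) :
    LocallyIntegrableOn (fun x => Real.log (f x)) Ω μ := by
  intro x hx
  refine (integrableAtFilter_log_of_analyticAt μ (hf x hx) ?_).filter_mono nhdsWithin_le_nhds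
  obtain ⟨y, hy, hfy⟩ := hne
  exact fun hzero => hfy <| hf.eqOn_zero_of_preconnected_of_eventuallyEq_zero hΩ hx
    (hzero.mono fun _ => not_not.mp) hy

theorem statement0_general {Ω : Set E} (hΩ : IsPreconnected Ω) (hf : AnalyticOnNhd ℝ f Ω)
    (hne : ∃ x ∈ Ω, f x ≠ 0) {Δ : Set E} (hΔ : IsCompact Δ) (hΔΩ : Δ ⊆ Ω) :
    IntegrableOn (fun x => |Real.log (|f x|)|) Δ μ ∧
      ∫⁻ x in Δ, ENNReal.ofReal |Real.log (|f x|)| ∂μ < ⊤ := by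
  have hlog : IntegrableOn (fun x => |Real.log (|f x|)|) Δ μ := by
    simpa only [Real.log_abs] using!
      (((locallyIntegrableOn_log_of_analyticOnNhd μ hΩ hf hne).mono_set hΔΩ).integrableOn_isCompact
        hΔ).abs
  exact ⟨hlog, hlog.lintegral_lt_top⟩

end AnalyticFunctions

/-!
STATEMENT 0: Let `Ω ⊆ ℝ^D` be a connected open set and let `f : Ω → ℝ` be a real analytic
function that is not identically zero on `Ω`. Then for every compact set `Δ ⊂ Ω`, the
function `x ↦ |log|f(x)||` is Lebesgue integrable on `Δ`; in particular
`∫_Δ |log|f(x)|| dx < ∞`.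
(`log` is the natural logarithm; `Real.log 0 = 0` by convention, which handles the
Lebesgue-null zero set of `f`.) -/
theorem statement0 {D : ℕ} {Ω : Set (EuclideanSpace ℝ (Fin D))}
    (hΩopen : IsOpen Ω) (hΩconn : IsConnected Ω)
    {f : EuclideanSpace ℝ (Fin D) → ℝ} (hf : AnalyticOnNhd ℝ f Ω)
    (hne : ∃ x ∈ Ω, f x ≠ 0)
    {Δ : Set (EuclideanSpace ℝ (Fin D))} (hΔ : IsCompact Δ) (hΔΩ : Δ ⊆ Ω) :
    IntegrableOn (fun x => |Real.log (|f x|)|) Δ volume ∧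
      ∫⁻ x in Δ, ENNReal.ofReal |Real.log (|f x|)| < ⊤ :=
  statement0_general volume hΩconn.isPreconnected hf hne hΔ hΔΩ
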